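/- (Fastest candidate trajectory.) Let 𝒜, ℬ, B be n×n matrices over the extended reals ℝ̄, let H = (ℬ^♯ ⊗ 𝒜) ⊕ B, let x(0) ∈ ℝ̄^n, and define x(m) = 𝒜^m ⊗ x(0) for m ≥ 0. Then the following are equivalent: (a) x(m) ≤ ℬ ⊗' x(m-1) for all m ≥ 1 and x(m) = B* ⊗ x(m) for all m ≥ 0; (b) H* ⊗ x(m) = x(m) for all m ≥ 0 (i.e. every x(m) lies in the image of H*). -/

import Mathlib

/-!
The two absorbing conventions at infinity make max-plus addition residuated on all of `EReal`:
`a + b ≤ c ↔ b ≤ mnAdd (-a) c`. Hence addition preserves arbitrary suprema, so that `x(m)` is the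
`m`-th iterate of `x ↦ 𝒜 ⊗ x`, and `x ≤ ℬ ⊗' y ↔ ℬ^♯ ⊗ x ≤ y`. Moreover `A* ⊗ x`, being the supremum
of the iterates of the monotone map `x ↦ A ⊗ x`, equals `x` exactly when `A ⊗ x ≤ x`. So both (a)
and (b) say that `(ℬ^♯ ⊗ 𝒜) ⊗ x(m) ≤ x(m)` and `B ⊗ x(m) ≤ x(m)` for all `m`.
-/

noncomputable section

/-- Max-plus matrix product over the extended reals (`-∞` is absorbing for `+` in `EReal`). -/
def mpMul {m n p : ℕ} (A : Matrix (Fin m) (Fin n) EReal) (B : Matrix (Fin n) (Fin p) EReal) :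
    Matrix (Fin m) (Fin p) EReal :=
  fun i j => ⨆ k, A i k + B k j

/-- Max-plus matrix-vector product. -/
def mpMulVec {m n : ℕ} (A : Matrix (Fin m) (Fin n) EReal) (x : Fin n → EReal) :
    Fin m → EReal :=
  fun i => ⨆ k, A i k + x k

/-- Min-plus addition on `EReal`: `+∞` is absorbing. -/
def mnAdd (a b : EReal) : EReal := -((-a) + (-b))

/-- Min-plus matrix product. -/
def mnMul {m n p : ℕ} (A : Matrix (Fin m) (Fin n) EReal) (B : Matrix (Fin n) (Fin p) EReal) :
    Matrix (Fin m) (Fin p) EReal :=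
  fun i j => ⨅ k, mnAdd (A i k) (B k j)

/-- Min-plus matrix-vector product. -/
def mnMulVec {m n : ℕ} (A : Matrix (Fin m) (Fin n) EReal) (x : Fin n → EReal) :
    Fin m → EReal :=
  fun i => ⨅ k, mnAdd (A i k) (x k)

/-- Conjugate matrix: `(conj A) i j = -(A j i)`. -/
def conjM {m n : ℕ} (A : Matrix (Fin m) (Fin n) EReal) : Matrix (Fin n) (Fin m) EReal :=
  fun i j => -(A j i)

/-- Max-plus identity matrix. -/
def mpId (n : ℕ) : Matrix (Fin n) (Fin n) EReal :=
  fun i j => if i = j then 0 else ⊥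

/-- Min-plus identity matrix. -/
def mnId (n : ℕ) : Matrix (Fin n) (Fin n) EReal :=
  fun i j => if i = j then 0 else ⊤

/-- Max-plus matrix powers. -/
def mpPow {n : ℕ} (A : Matrix (Fin n) (Fin n) EReal) : ℕ → Matrix (Fin n) (Fin n) EReal
  | 0 => mpId n
  | k + 1 => mpMul A (mpPow A k)

/-- Min-plus matrix powers. -/
def mnPow {n : ℕ} (A : Matrix (Fin n) (Fin n) EReal) : ℕ → Matrix (Fin n) (Fin n) EReal
  | 0 => mnId n
  | k + 1 => mnMul A (mnPow A k)

/-- Max-plus Kleene star: entrywise supremum of all max-plus powers. -/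
def mpStar {n : ℕ} (A : Matrix (Fin n) (Fin n) EReal) : Matrix (Fin n) (Fin n) EReal :=
  fun i j => ⨆ k, mpPow A k i j

/-- Min-plus star: entrywise infimum of all min-plus powers. -/
def mnStar {n : ℕ} (A : Matrix (Fin n) (Fin n) EReal) : Matrix (Fin n) (Fin n) EReal :=
  fun i j => ⨅ k, mnPow A k i j

/-- Entrywise maximum of two matrices (`A ⊕ B`). -/
def mSup {m n : ℕ} (A B : Matrix (Fin m) (Fin n) EReal) : Matrix (Fin m) (Fin n) EReal :=
  fun i j => A i j ⊔ B i j

lemma iSup_iterate_eq_self_iff {α : Type*} [CompleteLattice α] {f : α → α} (hf : Monotone f)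
    {x : α} : ⨆ k, f^[k] x = x ↔ f x ≤ x := by
  constructor
  · intro hx
    calc f x ≤ ⨆ k, f^[k] x := le_iSup (fun k => f^[k] x) 1
      _ = x := hx
  · intro hx
    exact le_antisymm (iSup_le fun k => hf.antitone_iterate_of_map_le hx k.zero_le)
      (le_iSup (fun k => f^[k] x) 0)

lemma gc_add_mnAdd_neg (a : EReal) : GaloisConnection (a + ·) (mnAdd (-a)) := fun b c =>
  calc a + b ≤ c ↔ a + b - c ≤ 0 := EReal.sub_nonpos.symm
    _ ↔ b - mnAdd (-a) c ≤ 0 := by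
      rw [mnAdd, neg_neg, sub_eq_add_neg, sub_eq_add_neg, neg_neg, add_assoc, add_left_comm]
    _ ↔ b ≤ mnAdd (-a) c := EReal.sub_nonpos

section Supremum

variable {ι : Sort*}

lemma ereal_add_iSup (a : EReal) (f : ι → EReal) : a + ⨆ k, f k = ⨆ k, a + f k :=
  (gc_add_mnAdd_neg a).l_iSup

lemma ereal_iSup_add (f : ι → EReal) (a : EReal) : (⨆ k, f k) + a = ⨆ k, f k + a := by
  simp only [add_comm _ a, ereal_add_iSup]

end Supremum

section Matrix

variable {m n p : ℕ}

lemma mpMulVec_mono (A : Matrix (Fin m) (Fin n) EReal) : Monotone (mpMulVec A) :=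
  fun _ _ hxy _ => iSup_mono fun k => add_le_add_right (hxy k) _

lemma mpMulVec_mpId (x : Fin n → EReal) : mpMulVec (mpId n) x = x := by
  funext i
  simp only [mpMulVec, mpId, ← iSup_eq_if, ereal_iSup_add, zero_add, iSup_iSup_eq_right]

lemma mpMulVec_mpMul (A : Matrix (Fin m) (Fin n) EReal) (B : Matrix (Fin n) (Fin p) EReal)
    (x : Fin p → EReal) : mpMulVec (mpMul A B) x = mpMulVec A (mpMulVec B x) := by
  funext i
  simp only [mpMulVec, mpMul, ereal_iSup_add, ereal_add_iSup, add_assoc]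
  exact iSup_comm

lemma mpMulVec_mSup (A B : Matrix (Fin m) (Fin n) EReal) (x : Fin n → EReal) :
    mpMulVec (mSup A B) x = mpMulVec A x ⊔ mpMulVec B x := by
  funext i
  simp only [mpMulVec, mSup, ← max_add_add_right, iSup_sup_eq, Pi.sup_apply]

lemma mpMulVec_mpPow (A : Matrix (Fin n) (Fin n) EReal) (k : ℕ) (x : Fin n → EReal) :
    mpMulVec (mpPow A k) x = (mpMulVec A)^[k] x := by
  induction k with
  | zero => exact mpMulVec_mpId x
  | succ k ih => rw [mpPow, mpMulVec_mpMul, ih, Function.iterate_succ_apply']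

lemma mpMulVec_mpStar (A : Matrix (Fin n) (Fin n) EReal) (x : Fin n → EReal) :
    mpMulVec (mpStar A) x = ⨆ k, (mpMulVec A)^[k] x := by
  funext i
  simp only [← mpMulVec_mpPow, iSup_apply, mpMulVec, mpStar, ereal_iSup_add]
  exact iSup_comm

lemma mpMulVec_mpStar_eq_self_iff (A : Matrix (Fin n) (Fin n) EReal) (x : Fin n → EReal) :
    mpMulVec (mpStar A) x = x ↔ mpMulVec A x ≤ x := by
  rw [mpMulVec_mpStar, iSup_iterate_eq_self_iff (mpMulVec_mono A)]

lemma gc_mpMulVec_conjM_mnMulVec (A : Matrix (Fin m) (Fin n) EReal) :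
    GaloisConnection (mpMulVec (conjM A)) (mnMulVec A) := by
  intro x y
  have residuate (i : Fin m) (j : Fin n) : -A i j + x i ≤ y j ↔ x i ≤ mnAdd (A i j) (y j) := by
    simpa only [neg_neg] using gc_add_mnAdd_neg (-A i j) (x i) (y j)
  simp only [Pi.le_def, mpMulVec, mnMulVec, conjM, iSup_le_iff, le_iInf_iff, residuate]
  exact forall_comm

lemma mpMulVec_mpStar_mSup_conjM_eq_self_iff (A C : Matrix (Fin m) (Fin n) EReal)
    (B : Matrix (Fin n) (Fin n) EReal) (x : Fin n → EReal) :
    mpMulVec (mpStar (mSup (mpMul (conjM C) A) B)) x = x ↔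
      mpMulVec A x ≤ mnMulVec C x ∧ mpMulVec (mpStar B) x = x := by
  rw [mpMulVec_mpStar_eq_self_iff, mpMulVec_mSup, sup_le_iff, mpMulVec_mpMul,
    gc_mpMulVec_conjM_mnMulVec C, mpMulVec_mpStar_eq_self_iff]

end Matrix

/-- fastest candidate trajectory. -/
theorem fastest_candidate {n : ℕ} (𝒜 ℬ B : Matrix (Fin n) (Fin n) EReal)
    (x0 : Fin n → EReal) :
    ((∀ m : ℕ, 1 ≤ m →
        mpMulVec (mpPow 𝒜 m) x0 ≤ mnMulVec ℬ (mpMulVec (mpPow 𝒜 (m - 1)) x0)) ∧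
      (∀ m : ℕ, mpMulVec (mpPow 𝒜 m) x0 = mpMulVec (mpStar B) (mpMulVec (mpPow 𝒜 m) x0))) ↔
      (∀ m : ℕ,
        mpMulVec (mpStar (mSup (mpMul (conjM ℬ) 𝒜) B)) (mpMulVec (mpPow 𝒜 m) x0) =
          mpMulVec (mpPow 𝒜 m) x0) := by
  simp only [mpMulVec_mpStar_mSup_conjM_eq_self_iff, forall_and, mpMulVec_mpPow]
  refine and_congr ⟨fun h m => ?_, fun h m hm => ?_⟩ (forall_congr' fun _ => eq_comm)
  · simpa only [Function.iterate_succ_apply', Nat.add_sub_cancel] using h (m + 1) m.succ_pos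
  · obtain ⟨m, rfl⟩ := Nat.exists_eq_add_of_le' hm
    simpa only [Function.iterate_succ_apply', Nat.add_sub_cancel] using h m
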